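/- Let k ≥ 1 be an integer and let K_k denote the Gaussian curvature of the conformal metric h_k(z)|dz|² on ℂ∖{0}, where h_k(z) = k²·|z|^{2(k−1)}·(1 + |z|^{2k}·u(|z|^{2k})²). Then K_k(z) → −4 as z → 0 with z ∈ ℂ∖{0}. -/

import Mathlib

/-!
In the coordinate `ζ = k log z` the metric `h_k(z)|dz|²` becomes `ρ(2 Re ζ)|dζ|²` with
`ρ(y) = eʸ + ((eʸ - 1)/y)²`, for every `k`. Curvature is invariant under holomorphic changes of
coordinate, so `K_k(z) = -2(ρρ'' - ρ'²)/ρ³` at `y = 2k log|z|`, and `y → -∞` as `z → 0`. There `ρ`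
is asymptotic to the hyperbolic cusp density `1/y²`, together with its first two derivatives:
`y²ρ → 1`, `y³ρ' → -2` and `y⁴ρ'' → 6`. Hence the curvature tends to `-2(1·6 - (-2)²) = -4`.
-/

open Complex Filter Topology Metric
open scoped ComplexOrder

/-- The function `u(t) = (t-1)/(t log t)` for `t ≠ 1`, extended by `u(1) = 1`. -/
noncomputable def u (t : ℝ) : ℝ := if t = 1 then 1 else (t - 1) / (t * Real.log t)

/-- Wirtinger derivative `∂g` of a complex-valued function on `ℂ` (real-differentiable sense). -/
noncomputable def wdz (g : ℂ → ℂ) (z : ℂ) : ℂ :=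
  (fderiv ℝ g z 1 - Complex.I * fderiv ℝ g z Complex.I) / 2

/-- Wirtinger derivative `∂̄g` of a complex-valued function on `ℂ`. -/
noncomputable def wdzbar (g : ℂ → ℂ) (z : ℂ) : ℂ :=
  (fderiv ℝ g z 1 + Complex.I * fderiv ℝ g z Complex.I) / 2

/-- `∂h` for a real-valued `h`. -/
noncomputable def wdzR (h : ℂ → ℝ) : ℂ → ℂ := wdz fun w => (h w : ℂ)

/-- `∂̄h` for a real-valued `h`. -/
noncomputable def wdzbarR (h : ℂ → ℝ) : ℂ → ℂ := wdzbar fun w => (h w : ℂ)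

/-- `∂∂̄h` for a real-valued `h`. -/
noncomputable def wlapR (h : ℂ → ℝ) : ℂ → ℂ := wdz (wdzbarR h)

/-- The numerator `h·∂∂̄h − ∂h·∂̄h` of (−1/2 times) the Gaussian curvature of `h|dz|²`. -/
noncomputable def curvNum (h : ℂ → ℝ) (z : ℂ) : ℂ :=
  (h z : ℂ) * wlapR h z - wdzR h z * wdzbarR h z

/-- The Gaussian curvature `K = −2(h·∂∂̄h − ∂h·∂̄h)/h³` of the conformal metric `h|dz|²`. -/
noncomputable def gaussCurv (h : ℂ → ℝ) (z : ℂ) : ℂ :=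
  -2 * curvNum h z / (h z : ℂ) ^ 3

open scoped ComplexConjugate

/-- `g` has Wirtinger derivatives `∂g = p` and `∂̄g = q` at `z`, encoded as the real Fréchet
derivative `v ↦ p v + q v̄`, so that both are computed by one set of differentiation rules. -/
def HasWirtingerDerivAt (g : ℂ → ℂ) (p q z : ℂ) : Prop :=
  HasFDerivAt (𝕜 := ℝ) g (p • ContinuousLinearMap.id ℝ ℂ + q • (conjCLE : ℂ →L[ℝ] ℂ)) z

namespace HasWirtingerDerivAt

variable {f g : ℂ → ℂ} {p q a b z : ℂ}

theorem of_hasFDerivAt {g' : ℂ →L[ℝ] ℂ} (hg : HasFDerivAt g g' z)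
    (hg' : ∀ v, g' v = p * v + q * conj v) : HasWirtingerDerivAt g p q z :=
  hg.congr_fderiv (by ext v; simp [hg'])

theorem fderiv_apply (hg : HasWirtingerDerivAt g p q z) (v : ℂ) :
    fderiv ℝ g z v = p * v + q * conj v := by
  simp [HasFDerivAt.fderiv hg]

theorem wdz_eq (hg : HasWirtingerDerivAt g p q z) : wdz g z = p := by
  rw [wdz, hg.fderiv_apply, hg.fderiv_apply, map_one, conj_I]
  linear_combination (q / 2 - p / 2) * I_mul_I

theorem wdzbar_eq (hg : HasWirtingerDerivAt g p q z) : wdzbar g z = q := by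
  rw [wdzbar, hg.fderiv_apply, hg.fderiv_apply, map_one, conj_I]
  linear_combination (p / 2 - q / 2) * I_mul_I

theorem of_differentiableAt (hg : DifferentiableAt ℝ g z) :
    HasWirtingerDerivAt g (wdz g z) (wdzbar g z) z := by
  refine of_hasFDerivAt hg.hasFDerivAt fun v => ?_
  have hv : fderiv ℝ g z v = v.re * fderiv ℝ g z 1 + v.im * fderiv ℝ g z I := by
    conv_lhs => rw [← re_add_im v, ← mul_one (v.re : ℂ)]
    simp only [map_add, ← real_smul, map_smul]
  rw [hv, wdz, wdzbar, re_eq_add_conj, im_eq_sub_conj]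
  field_simp
  linear_combination (v - conj v) * fderiv ℝ g z I * I_mul_I

theorem ofReal_of_differentiableAt {h : ℂ → ℝ} (hh : DifferentiableAt ℝ h z) :
    HasWirtingerDerivAt (fun w => (h w : ℂ)) (wdzR h z) (wdzbarR h z) z :=
  of_differentiableAt (ofRealCLM.differentiableAt.comp z hh)

theorem of_hasDerivAt (hf : HasDerivAt f a z) : HasWirtingerDerivAt f a 0 z :=
  of_hasFDerivAt (hf.hasFDerivAt.restrictScalars ℝ) fun v => by simp [mul_comm]

theorem congr_of_eventuallyEq (hg : HasWirtingerDerivAt g p q z) (hfg : f =ᶠ[𝓝 z] g) :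
    HasWirtingerDerivAt f p q z :=
  HasFDerivAt.congr_of_eventuallyEq hg hfg

theorem add (hf : HasWirtingerDerivAt f a b z) (hg : HasWirtingerDerivAt g p q z) :
    HasWirtingerDerivAt (fun w => f w + g w) (a + p) (b + q) z := by
  refine of_hasFDerivAt (HasFDerivAt.add hf hg) fun v => ?_
  simp only [add_apply, smul_apply, ContinuousLinearMap.id_apply, smul_eq_mul,
    ContinuousLinearEquiv.coe_coe, conjCLE_apply]
  ring

theorem mul (hf : HasWirtingerDerivAt f a b z) (hg : HasWirtingerDerivAt g p q z) :
    HasWirtingerDerivAt (fun w => f w * g w) (a * g z + f z * p) (b * g z + f z * q) z := by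
  refine of_hasFDerivAt (HasFDerivAt.mul hf hg) fun v => ?_
  simp only [add_apply, smul_apply, ContinuousLinearMap.id_apply, smul_eq_mul,
    ContinuousLinearEquiv.coe_coe, conjCLE_apply]
  ring

theorem conj_comp (hg : HasWirtingerDerivAt g p q z) :
    HasWirtingerDerivAt (fun w => conj (g w)) (conj q) (conj p) z :=
  of_hasFDerivAt ((conjCLE : ℂ →L[ℝ] ℂ).hasFDerivAt.comp z hg) fun v => by simp [add_comm]

theorem comp_hasDerivAt (hg : HasWirtingerDerivAt g p q (f z)) (hf : HasDerivAt f a z) :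
    HasWirtingerDerivAt (fun w => g (f w)) (p * a) (q * conj a) z := by
  refine of_hasFDerivAt (HasFDerivAt.comp z hg (hf.hasFDerivAt.restrictScalars ℝ)) fun v => ?_
  simp only [add_apply, smul_apply, ContinuousLinearMap.comp_apply, ContinuousLinearMap.id_apply,
    ContinuousLinearMap.coe_restrictScalars', ContinuousLinearMap.toSpanSingleton_apply,
    smul_eq_mul, ContinuousLinearEquiv.coe_coe, conjCLE_apply, map_mul]
  ring

theorem ofReal_comp_two_mul_re {ρ : ℝ → ℝ} {c : ℝ} (hρ : HasDerivAt ρ c (2 * z.re)) :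
    HasWirtingerDerivAt (fun w => (ρ (2 * w.re) : ℂ)) c c z := by
  have hre : HasFDerivAt (fun w : ℂ => 2 * w.re) ((2 : ℝ) • reCLM) z :=
    reCLM.hasFDerivAt.const_mul 2
  exact of_hasFDerivAt (ofRealCLM.hasFDerivAt.comp z (hρ.comp_hasFDerivAt z hre)) fun v => by
    simp [← mul_add, add_conj]

end HasWirtingerDerivAt

section Curvature

variable {h : ℂ → ℝ} {z : ℂ}

theorem gaussCurv_eq_of_hasWirtingerDerivAt {p q : ℂ → ℂ} {l m : ℂ}
    (hh : ∀ᶠ w in 𝓝 z, HasWirtingerDerivAt (fun w => (h w : ℂ)) (p w) (q w) w)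
    (hq : HasWirtingerDerivAt q l m z) :
    gaussCurv h z = -2 * (h z * l - p z * q z) / (h z : ℂ) ^ 3 := by
  have hbar : wdzbarR h =ᶠ[𝓝 z] q := hh.mono fun w hw => hw.wdzbar_eq
  have hlap : wlapR h z = l := (hq.congr_of_eventuallyEq hbar).wdz_eq
  have hdz : wdzR h z = p z := hh.self_of_nhds.wdz_eq
  rw [gaussCurv, curvNum, hlap, hdz, hbar.self_of_nhds]

theorem gaussCurv_congr {h₁ h₂ : ℂ → ℝ} (hh : h₁ =ᶠ[𝓝 z] h₂) :
    gaussCurv h₁ z = gaussCurv h₂ z := by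
  have hfderiv : fderiv ℝ (fun w => (h₁ w : ℂ)) =ᶠ[𝓝 z] fderiv ℝ fun w => (h₂ w : ℂ) :=
    (hh.fun_comp ofReal).fderiv
  have hbar : wdzbarR h₁ =ᶠ[𝓝 z] wdzbarR h₂ :=
    hfderiv.mono fun w hw => by simp only [wdzbarR, wdzbar, hw]
  simp only [gaussCurv, curvNum, wlapR, wdzR, wdz, hbar.fderiv_eq, hbar.eq_of_nhds,
    hfderiv.eq_of_nhds, hh.eq_of_nhds]

theorem differentiableAt_wdzbarR (hh : ContDiffAt ℝ 2 h z) :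
    DifferentiableAt ℝ (wdzbarR h) z := by
  have hd : DifferentiableAt ℝ (fderiv ℝ fun w => (h w : ℂ)) z :=
    ((ofRealCLM.contDiff.contDiffAt.comp z hh).fderiv_right (m := 1) le_rfl).differentiableAt
      one_ne_zero
  unfold wdzbarR wdzbar
  fun_prop

theorem hasWirtingerDerivAt_pullback {f : ℂ → ℂ} (hf : AnalyticAt ℂ f z)
    (hh : DifferentiableAt ℝ h (f z)) :
    HasWirtingerDerivAt (fun w => ((‖deriv f w‖ ^ 2 * h (f w) : ℝ) : ℂ))
      (conj (deriv f z) * (deriv (deriv f) z * h (f z) + deriv f z ^ 2 * wdzR h (f z)))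
      (deriv f z * (conj (deriv (deriv f) z) * h (f z) + conj (deriv f z) ^ 2 * wdzbarR h (f z)))
      z := by
  have hd := HasWirtingerDerivAt.of_hasDerivAt hf.deriv.differentiableAt.hasDerivAt
  have hcomp := (HasWirtingerDerivAt.ofReal_of_differentiableAt hh).comp_hasDerivAt
    hf.differentiableAt.hasDerivAt
  convert (hd.mul hd.conj_comp).mul hcomp using 1
  · ext w
    simp [mul_conj']
  · simp only [map_zero]
    ring
  · ring

theorem gaussCurv_pullback {f : ℂ → ℂ} (hf : AnalyticAt ℂ f z) (hf' : deriv f z ≠ 0)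
    (hh : ContDiffAt ℝ 2 h (f z)) :
    gaussCurv (fun w => ‖deriv f w‖ ^ 2 * h (f w)) z = gaussCurv h (f z) := by
  have hh' : ∀ᶠ w in 𝓝 z, DifferentiableAt ℝ h (f w) :=
    hf.continuousAt.eventually
      ((hh.eventually (by simp)).mono fun y hy => hy.differentiableAt two_ne_zero)
  have hfirst := (hf.eventually_analyticAt.and hh').mono fun w hw =>
    hasWirtingerDerivAt_pullback hw.1 hw.2
  have hd := HasWirtingerDerivAt.of_hasDerivAt hf.deriv.differentiableAt.hasDerivAt
  have hd₂ := HasWirtingerDerivAt.of_hasDerivAt hf.deriv.deriv.differentiableAt.hasDerivAt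
  have hcomp := (HasWirtingerDerivAt.ofReal_of_differentiableAt
    hh'.self_of_nhds).comp_hasDerivAt hf.differentiableAt.hasDerivAt
  have hbar := (HasWirtingerDerivAt.of_differentiableAt
    (differentiableAt_wdzbarR hh)).comp_hasDerivAt hf.differentiableAt.hasDerivAt
  have hsecond := hd.mul ((hd₂.conj_comp.mul hcomp).add ((hd.conj_comp.mul hd.conj_comp).mul hbar))
  have hconj : conj (deriv f z) ≠ 0 := by simpa using hf'
  rw [gaussCurv_eq_of_hasWirtingerDerivAt hfirst (by simpa only [pow_two] using hsecond)]
  simp only [gaussCurv, curvNum, wlapR]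
  push_cast [← mul_conj']
  rcases eq_or_ne (h (f z) : ℂ) 0 with h₀ | h₀
  · simp [h₀]
  · simp only [map_zero]
    field_simp
    ring

/-- The Gaussian curvature at `2 Re ζ = y` of the metric `ρ(2 Re ζ)|dζ|²`; the factor `2` makes
both Wirtinger derivatives of `ρ(2 Re ζ)` equal to `ρ'(2 Re ζ)`. -/
noncomputable def stripCurv (ρ : ℝ → ℝ) (y : ℝ) : ℝ :=
  -2 * (ρ y * deriv (deriv ρ) y - deriv ρ y ^ 2) / ρ y ^ 3

theorem gaussCurv_comp_two_mul_re {ρ : ℝ → ℝ} (hρ : ContDiffAt ℝ 2 ρ (2 * z.re)) :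
    gaussCurv (fun w => ρ (2 * w.re)) z = stripCurv ρ (2 * z.re) := by
  have hdiff : ∀ᶠ w : ℂ in 𝓝 z, DifferentiableAt ℝ ρ (2 * w.re) :=
    (by fun_prop : ContinuousAt (fun w : ℂ => 2 * w.re) z).eventually
      ((hρ.eventually (by simp)).mono fun y hy => hy.differentiableAt two_ne_zero)
  have hderiv : DifferentiableAt ℝ (deriv ρ) (2 * z.re) :=
    (hρ.derivWithin le_rfl).differentiableAt one_ne_zero
  rw [gaussCurv_eq_of_hasWirtingerDerivAt
    (hdiff.mono fun w hw => HasWirtingerDerivAt.ofReal_comp_two_mul_re hw.hasDerivAt)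
    (HasWirtingerDerivAt.ofReal_comp_two_mul_re hderiv.hasDerivAt), stripCurv]
  push_cast
  ring

theorem gaussCurv_comp_log_norm {ρ : ℝ → ℝ} {c : ℝ} (hc : c ≠ 0) (hz : z ≠ 0)
    (hρ : ContDiffAt ℝ 2 ρ (2 * (c * Real.log ‖z‖))) :
    gaussCurv (fun w => (c / ‖w‖) ^ 2 * ρ (2 * (c * Real.log ‖w‖))) z =
      stripCurv ρ (2 * (c * Real.log ‖z‖)) := by
  -- dividing by `z` puts the branch cut of `Complex.log` away from the point considered
  let f : ℂ → ℂ := fun w => c * (log (w / z) + log z)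
  have hslit : ∀ᶠ w in 𝓝 z, w / z ∈ slitPlane :=
    (continuous_id.div_const z).continuousAt.eventually_mem
      (isOpen_slitPlane.mem_nhds (by simp [hz]))
  have hf : AnalyticAt ℂ f z := by
    have := hslit.self_of_nhds
    fun_prop (disch := assumption)
  have hre : ∀ᶠ w in 𝓝 z, (f w).re = c * Real.log ‖w‖ := by
    filter_upwards [isOpen_ne.eventually_mem hz] with w hw
    have : ‖z‖ ≠ 0 := by simpa using hz
    have : ‖w‖ ≠ 0 := by simpa using hw
    simp [f, log_re, Real.log_div, *]
  have hderiv : ∀ᶠ w in 𝓝 z, deriv f w = c / w := by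
    filter_upwards [hslit, isOpen_ne.eventually_mem hz] with w hw hw₀
    have hlog := (((hasDerivAt_id w).div_const z).clog hw).add_const (log z)
    refine ((hlog.const_mul (c : ℂ)).congr_deriv ?_).deriv
    have : w ≠ 0 := hw₀
    simp only [id]
    field_simp
  have hpull : (fun w => (c / ‖w‖) ^ 2 * ρ (2 * (c * Real.log ‖w‖))) =ᶠ[𝓝 z]
      fun w => ‖deriv f w‖ ^ 2 * ρ (2 * (f w).re) := by
    filter_upwards [hre, hderiv] with w hw hw'
    simp [hw, hw', div_pow]
  rw [← hre.self_of_nhds] at hρ ⊢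
  have hderiv₀ : deriv f z ≠ 0 := by simp [hderiv.self_of_nhds, hc, hz]
  have hstrip : ContDiffAt ℝ 2 (fun w : ℂ => ρ (2 * w.re)) (f z) :=
    hρ.comp (f z) (contDiffAt_const.mul reCLM.contDiff.contDiffAt)
  rw [gaussCurv_congr hpull, gaussCurv_pullback hf hderiv₀ hstrip, gaussCurv_comp_two_mul_re hρ]

end Curvature

section Cusp

/-- The divided difference `(eʸ - 1)/y` of `exp` at `0`, which is `eʸ u(eʸ)` for `y ≠ 0`
(the value at `0` is the junk value `0`). -/
noncomputable def expQuotient (y : ℝ) : ℝ := (Real.exp y - 1) / y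

/-- The density `ρ` for which `h_1(z)|dz|²` becomes `ρ(2 Re ζ)|dζ|²` in the coordinate
`ζ = log z`. -/
noncomputable def cuspDensity (y : ℝ) : ℝ := Real.exp y + expQuotient y ^ 2

variable {y : ℝ}

theorem exp_mul_u_exp (hy : y ≠ 0) : Real.exp y * u (Real.exp y) = expQuotient y := by
  have : Real.exp y ≠ 1 := by simpa using hy
  rw [u, if_neg this, Real.log_exp, expQuotient]
  field_simp

theorem cuspDensity_eq (hy : y ≠ 0) :
    cuspDensity y = Real.exp y * (1 + Real.exp y * u (Real.exp y) ^ 2) := by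
  rw [cuspDensity, ← exp_mul_u_exp hy]
  ring

theorem hasDerivAt_expQuotient (hy : y ≠ 0) :
    HasDerivAt expQuotient ((Real.exp y - expQuotient y) / y) y := by
  refine (((Real.hasDerivAt_exp y).sub_const 1).div (hasDerivAt_id y) hy).congr_deriv ?_
  simp only [expQuotient, id]
  field_simp

theorem deriv_expQuotient_eventuallyEq (hy : y ≠ 0) :
    deriv expQuotient =ᶠ[𝓝 y] fun x => (Real.exp x - expQuotient x) / x :=
  (isOpen_ne.eventually_mem hy).mono fun _ hx => (hasDerivAt_expQuotient hx).deriv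

theorem hasDerivAt_deriv_expQuotient (hy : y ≠ 0) :
    HasDerivAt (deriv expQuotient) ((Real.exp y - 2 * deriv expQuotient y) / y) y := by
  refine ((((Real.hasDerivAt_exp y).sub (hasDerivAt_expQuotient hy)).div (hasDerivAt_id y)
    hy).congr_of_eventuallyEq (deriv_expQuotient_eventuallyEq hy)).congr_deriv ?_
  rw [(deriv_expQuotient_eventuallyEq hy).eq_of_nhds]
  simp only [id, Pi.sub_apply]
  field_simp
  ring

theorem contDiffAt_cuspDensity (hy : y ≠ 0) : ContDiffAt ℝ 2 cuspDensity y := by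
  unfold cuspDensity expQuotient
  fun_prop (disch := assumption)

theorem deriv_cuspDensity (hy : y ≠ 0) :
    deriv cuspDensity y = Real.exp y + 2 * expQuotient y * deriv expQuotient y := by
  rw [(hasDerivAt_expQuotient hy).deriv]
  exact (((Real.hasDerivAt_exp y).add ((hasDerivAt_expQuotient hy).pow 2)).congr_deriv
    (by simp)).deriv

theorem deriv_deriv_cuspDensity (hy : y ≠ 0) :
    deriv (deriv cuspDensity) y = Real.exp y + 2 * deriv expQuotient y ^ 2 +
      2 * expQuotient y * deriv (deriv expQuotient) y := by
  have hderiv : deriv cuspDensity =ᶠ[𝓝 y]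
      fun x => Real.exp x + 2 * expQuotient x * deriv expQuotient x :=
    (isOpen_ne.eventually_mem hy).mono fun _ hx => deriv_cuspDensity hx
  have hv := (hasDerivAt_expQuotient hy).differentiableAt.hasDerivAt
  have hv' := (hasDerivAt_deriv_expQuotient hy).differentiableAt.hasDerivAt
  rw [hderiv.deriv_eq]
  refine (((Real.hasDerivAt_exp y).add ((hv.const_mul 2).mul hv')).congr_deriv ?_).deriv
  ring

theorem tendsto_pow_mul_exp_atBot_nhds_zero (n : ℕ) :
    Tendsto (fun y : ℝ => y ^ n * Real.exp y) atBot (𝓝 0) := by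
  have h := ((Real.tendsto_pow_mul_exp_neg_atTop_nhds_zero n).comp
    tendsto_neg_atBot_atTop).const_mul ((-1 : ℝ) ^ n)
  rw [mul_zero] at h
  refine h.congr fun y => ?_
  simp only [Function.comp_apply, neg_neg, ← mul_assoc, ← mul_pow, neg_mul, one_mul]

theorem tendsto_mul_expQuotient_atBot :
    Tendsto (fun y => y * expQuotient y) atBot (𝓝 (-1)) := by
  have h : Tendsto (fun y => Real.exp y - 1) atBot (𝓝 (-1)) := by
    simpa using Real.tendsto_exp_atBot.sub_const 1
  refine h.congr' ?_
  filter_upwards [eventually_ne_atBot 0] with y hy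
  rw [expQuotient, mul_div_cancel₀ _ hy]

theorem tendsto_sq_mul_deriv_expQuotient_atBot :
    Tendsto (fun y => y ^ 2 * deriv expQuotient y) atBot (𝓝 1) := by
  have h := (tendsto_pow_mul_exp_atBot_nhds_zero 1).sub tendsto_mul_expQuotient_atBot
  rw [sub_neg_eq_add, zero_add] at h
  refine h.congr' ?_
  filter_upwards [eventually_ne_atBot 0] with y hy
  rw [(hasDerivAt_expQuotient hy).deriv]
  field_simp

theorem tendsto_cube_mul_deriv_deriv_expQuotient_atBot :
    Tendsto (fun y => y ^ 3 * deriv (deriv expQuotient) y) atBot (𝓝 (-2)) := by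
  have h := (tendsto_pow_mul_exp_atBot_nhds_zero 2).sub
    (tendsto_sq_mul_deriv_expQuotient_atBot.const_mul 2)
  norm_num only at h
  refine h.congr' ?_
  filter_upwards [eventually_ne_atBot 0] with y hy
  rw [(hasDerivAt_deriv_expQuotient hy).deriv]
  field_simp

theorem tendsto_sq_mul_cuspDensity_atBot :
    Tendsto (fun y => y ^ 2 * cuspDensity y) atBot (𝓝 1) := by
  have h := (tendsto_pow_mul_exp_atBot_nhds_zero 2).add (tendsto_mul_expQuotient_atBot.pow 2)
  norm_num only at h
  exact h.congr fun y => by rw [cuspDensity]; ring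

theorem tendsto_cube_mul_deriv_cuspDensity_atBot :
    Tendsto (fun y => y ^ 3 * deriv cuspDensity y) atBot (𝓝 (-2)) := by
  have h := (tendsto_pow_mul_exp_atBot_nhds_zero 3).add
    ((tendsto_mul_expQuotient_atBot.mul tendsto_sq_mul_deriv_expQuotient_atBot).const_mul 2)
  norm_num only at h
  refine h.congr' ?_
  filter_upwards [eventually_ne_atBot 0] with y hy
  rw [deriv_cuspDensity hy]
  ring

theorem tendsto_pow_four_mul_deriv_deriv_cuspDensity_atBot :
    Tendsto (fun y => y ^ 4 * deriv (deriv cuspDensity) y) atBot (𝓝 6) := by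
  have h := ((tendsto_pow_mul_exp_atBot_nhds_zero 4).add
    ((tendsto_sq_mul_deriv_expQuotient_atBot.pow 2).const_mul 2)).add
    ((tendsto_mul_expQuotient_atBot.mul tendsto_cube_mul_deriv_deriv_expQuotient_atBot).const_mul 2)
  norm_num only at h
  refine h.congr' ?_
  filter_upwards [eventually_ne_atBot 0] with y hy
  rw [deriv_deriv_cuspDensity hy]
  ring

theorem tendsto_stripCurv_cuspDensity_atBot :
    Tendsto (stripCurv cuspDensity) atBot (𝓝 (-4)) := by
  have h := ((tendsto_sq_mul_cuspDensity_atBot.mul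
    tendsto_pow_four_mul_deriv_deriv_cuspDensity_atBot).sub
    (tendsto_cube_mul_deriv_cuspDensity_atBot.pow 2)).const_mul (-2) |>.div
    (tendsto_sq_mul_cuspDensity_atBot.pow 3) (by norm_num)
  norm_num only at h
  refine h.congr' ?_
  filter_upwards [eventually_ne_atBot 0] with y hy
  simp only [stripCurv, Pi.div_apply]
  rw [← mul_div_mul_left _ (cuspDensity y ^ 3) (pow_ne_zero 6 hy)]
  congr 1 <;> ring

theorem conformalFactor_eq_cuspDensity {α r : ℝ} (hα : α ≠ 0) (hr : 0 < r) (hr₁ : r ≠ 1) :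
    α ^ 2 * r ^ (2 * (α - 1)) * (1 + r ^ (2 * α) * u (r ^ (2 * α)) ^ 2) =
      (α / r) ^ 2 * cuspDensity (2 * (α * Real.log r)) := by
  have hlog : 2 * (α * Real.log r) ≠ 0 := by
    simp [hα, hr.ne', hr₁, (by linarith : r ≠ -1)]
  have hexp : Real.exp (2 * (α * Real.log r)) = r ^ (2 * α) := by
    rw [Real.rpow_def_of_pos hr]
    ring_nf
  have hpow : r ^ (2 * (α - 1)) = r ^ (2 * α) / r ^ 2 := by
    rw [mul_sub, Real.rpow_sub hr]
    norm_num
  rw [cuspDensity_eq hlog, hexp, hpow]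
  ring

end Cusp

theorem stmt10_general {α : ℝ} (hα : 0 < α) :
    Tendsto (gaussCurv fun w =>
        α ^ 2 * ‖w‖ ^ (2 * (α - 1)) * (1 + ‖w‖ ^ (2 * α) * u (‖w‖ ^ (2 * α)) ^ 2))
      (𝓝[≠] 0) (𝓝 (-4)) := by
  have hlog : Tendsto (fun z : ℂ => 2 * (α * Real.log ‖z‖)) (𝓝[≠] 0) atBot :=
    ((Real.tendsto_log_nhdsGT_zero.comp tendsto_norm_nhdsNE_zero).const_mul_atBot
      hα).const_mul_atBot two_pos
  have hlim := (continuous_ofReal.tendsto (-4)).comp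
    (tendsto_stripCurv_cuspDensity_atBot.comp hlog)
  push_cast at hlim
  refine hlim.congr' ?_
  filter_upwards [self_mem_nhdsWithin, hlog.eventually_ne_atBot 0] with z hz hy
  have hz₁ : ‖z‖ ≠ 1 := fun h => hy (by simp [h])
  have hfactor : ∀ᶠ w in 𝓝 z, w ≠ 0 ∧ ‖w‖ ≠ 1 :=
    (isOpen_ne.eventually_mem hz).and (continuous_norm.continuousAt.eventually_ne hz₁)
  rw [gaussCurv_congr (hfactor.mono fun w hw =>
    conformalFactor_eq_cuspDensity hα.ne' (norm_pos_iff.2 hw.1) hw.2),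
    gaussCurv_comp_log_norm hα.ne' hz (contDiffAt_cuspDensity hy)]
  rfl

/-- the Gaussian curvature of `h_k|dz|²` on `ℂ∖{0}` tends to `−4`
as `z → 0`. -/
theorem stmt10 (k : ℕ) (hk : 1 ≤ k) :
    Tendsto (gaussCurv (fun w =>
        (k : ℝ) ^ 2 * ‖w‖ ^ (2 * (k - 1)) *
          (1 + ‖w‖ ^ (2 * k) * u (‖w‖ ^ (2 * k)) ^ 2)))
      (𝓝[≠] (0 : ℂ)) (𝓝 (-4)) := by
  have h := stmt10_general (α := k) (Nat.cast_pos.2 hk)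
  rw [← Nat.cast_pred hk] at h
  exact_mod_cast h
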